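/- There exist universal constants c > 0 and n₀ such that for all n ≥ n₀, r ≥ 1, and k with n·r ≤ k ≤ n²: if a randomized t-round adaptive algorithm, which in each round makes k linear measurements of the concatenated vector (vec(A), vec(B)) ∈ ℝ^{2n²}, is such that for every pair of n×n real matrices A, B it outputs a matrix X of rank at most r satisfying ‖A·X − B‖ ≤ 2·min{‖A·X' − B‖ : rank(X') ≤ r} with probability at least 9/10 (over the seed), then t ≥ c·log(n²/k)/log log n. -/

import Mathlib

/-!
The lower bound comes from instances whose optimum is zero, on which a factor-two approximation
has to be exact (`mul_eq_of_approx`). They encode pointer chasing: given matrices `p₀, …, p_t` of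
size `d × d` with `(t + 2) d ≤ n`, the block bidiagonal system with `x₀` known and
`x_{j+1} = p_j x_j` has the form `(1 - shiftMat p) y = startVec x₀`, and its unique solution lists
all `x_j`. Taking `B` to be the right-hand side in one column gives a rank-one exact solution, so a
successful algorithm must output `x_{t+1}` exactly.

A deterministic algorithm with `4 t k ≤ d²` fails for almost every `p` (`ae_fail`). After `j` rounds
the blocks below `j` are revealed for free; the inputs that still give the same answers form an
affine slice `p + freeDir p j`, and the query matrix of the next round is constant on it. The
invariant is that `x_{j+1}` still varies in more than `d/2` dimensions along this slice. For the
next round, the vectors `x` violating the invariant lie in a subspace of dimension at most `d/2`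
(`exists_exceptional_subspace`, a dimension count), which `x_{j+1}` avoids almost surely. After `t`
rounds all answers are constant on the slice while `x_{t+1}` is not. The slices are nested, so the
null sets combine by Fubini and translation invariance (`ae_slice_of_ae_subslice`).

A further Fubini over the random seed contradicts success probability `9/10` on every instance.
Hence no such `d` exists, which forces `t³` to be at least a constant times `n²/k`; this is stronger
than the claimed logarithmic bound (`exists_block_size`).
-/

open MeasureTheory ProbabilityTheory Matrix
open scoped ENNReal Classical

noncomputable section

/-- Squared Euclidean norm of a finitely-indexed real vector. -/
def sqNorm {ι : Type*} [Fintype ι] (x : ι → ℝ) : ℝ := ∑ i, x i ^ 2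

/-- Squared Frobenius norm of a real matrix. -/
def frobSq {m n : Type*} [Fintype m] [Fintype n] (A : Matrix m n ℝ) : ℝ :=
  ∑ i, ∑ j, A i j ^ 2

/-- Spectral (ℓ₂ operator) norm of a real matrix. -/
def specNorm {m n : Type*} [Fintype m] [Fintype n] (A : Matrix m n ℝ) : ℝ :=
  sSup ((fun x : n → ℝ => Real.sqrt (sqNorm (A.mulVec x))) '' {x | sqNorm x ≤ 1})

/-- `i`-th largest singular value (1-based), characterized via
`σ_i(A) = min {‖A − X‖ : rank X ≤ i − 1}`. -/
def singVal {m n : Type*} [Fintype m] [Fintype n] (A : Matrix m n ℝ) (i : ℕ) : ℝ :=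
  sInf {c | ∃ X : Matrix m n ℝ, X.rank ≤ i - 1 ∧ c = specNorm (A - X)}

/-- Flattening of an `n × n` matrix into a vector in `ℝ^{n²}`. -/
def vec (n : ℕ) (A : Matrix (Fin n) (Fin n) ℝ) : Fin (n * n) → ℝ :=
  fun i => A (finProdFinEquiv.symm i).1 (finProdFinEquiv.symm i).2

/-- `u ⊗ v = vec (u vᵀ) ∈ ℝ^{n²}`. -/
def tensor {n : ℕ} (u v : Fin n → ℝ) : Fin (n * n) → ℝ :=
  vec n (Matrix.of fun i j => u i * v j)

/-- Standard Gaussian measure on `ι → ℝ`. -/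
def stdGaussian (ι : Type*) [Fintype ι] : Measure (ι → ℝ) :=
  Measure.pi fun _ => gaussianReal 0 1

/-- Standard Gaussian measure on `n × n` matrices (as `Fin n → Fin n → ℝ`). -/
def stdGaussianMat (n : ℕ) : Measure (Fin n → Fin n → ℝ) :=
  Measure.pi fun _ => stdGaussian (Fin n)

/-- Query maps of a deterministic `t`-round adaptive algorithm making `k` linear
measurements per round on inputs in `ℝ^N`. -/
def QueryMaps (N k t : ℕ) : Type :=
  (j : Fin t) → (Fin (j : ℕ) → (Fin k → ℝ)) → Matrix (Fin k) (Fin N) ℝ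

namespace QueryMaps

variable {N k t : ℕ}

/-- Restriction of a round-`j` history to the first `i` rounds. -/
def prefixHist {j : Fin t} (h : Fin (j : ℕ) → Fin k → ℝ) {i : Fin t}
    (hij : (i : ℕ) < (j : ℕ)) : Fin (i : ℕ) → Fin k → ℝ :=
  fun l => h ⟨l.1, l.isLt.trans hij⟩

/-- Validity of query maps: measurability, orthonormal rows within each round, and
orthogonality across rounds along consistent histories. -/
def Valid (Q : QueryMaps N k t) : Prop :=
  (∀ (j : Fin t) (i : Fin k) (l : Fin N), Measurable fun h => Q j h i l) ∧
  (∀ (j : Fin t) (h : Fin (j : ℕ) → Fin k → ℝ), Q j h * (Q j h)ᵀ = 1) ∧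
  (∀ (j i : Fin t) (hij : (i : ℕ) < (j : ℕ)) (h : Fin (j : ℕ) → Fin k → ℝ),
      Q j h * (Q i (prefixHist h hij))ᵀ = 0)

/-- Responses of the algorithm under exact linear measurements of `a`. -/
def resp (Q : QueryMaps N k t) (a : Fin N → ℝ) (j : Fin t) : Fin k → ℝ :=
  (Q j fun i => resp Q a ⟨i.1, i.isLt.trans j.isLt⟩).mulVec a
termination_by (j : ℕ)
decreasing_by exact i.isLt

/-- Responses of the algorithm under noisy linear measurements of `a`, with fresh
per-round noise `g`. -/
def nresp (Q : QueryMaps N k t) (a : Fin N → ℝ) (g : Fin t → Fin k → ℝ) (j : Fin t) :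
    Fin k → ℝ :=
  ((Q j fun i => nresp Q a g ⟨i.1, i.isLt.trans j.isLt⟩).mulVec a) + g j
termination_by (j : ℕ)
decreasing_by exact i.isLt

/-- The `tk × N` matrix stacking all the query matrices realized along the run of the
algorithm on input `a` (exact measurements). -/
def runMat (Q : QueryMaps N k t) (a : Fin N → ℝ) : Matrix (Fin t × Fin k) (Fin N) ℝ :=
  Matrix.of fun p l =>
    Q p.1 (fun i => resp Q a ⟨i.1, i.isLt.trans p.1.isLt⟩) p.2 l

end QueryMaps

/-- Kullback–Leibler divergence, valued in `[0, ∞]`, defined with the natural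
logarithm. -/
def klDiv {Ω : Type*} [MeasurableSpace Ω] (P Q : Measure Ω) : ℝ≥0∞ :=
  if P ≪ Q ∧ Integrable (fun x => Real.log ((P.rnDeriv Q x).toReal)) P then
    ENNReal.ofReal (∫ x, Real.log ((P.rnDeriv Q x).toReal) ∂P)
  else ⊤


/-- The rank-`r` plant `Σ_{i=1}^r uᵢ vᵢᵀ` built from the rows of `U` and `V`. -/
def plant {n r : ℕ} (U V : Fin r → Fin n → ℝ) : Matrix (Fin n) (Fin n) ℝ :=
  Matrix.of fun i j => ∑ l, U l i * V l j

/-- Schatten-`p` norm (real `p`), via the singular values. -/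
def schattenNorm {n : ℕ} (p : ℝ) (A : Matrix (Fin n) (Fin n) ℝ) : ℝ :=
  (∑ i ∈ Finset.range n, singVal A (i + 1) ^ p) ^ (1 / p)

/-- Ky-Fan `p` norm: sum of the `p` largest singular values. -/
def kyFanNorm {n : ℕ} (p : ℕ) (A : Matrix (Fin n) (Fin n) ℝ) : ℝ :=
  ∑ i ∈ Finset.range p, singVal A (i + 1)

/-! ### Null sets in affine slices -/

/-- If almost every slice `p + v + K'` with `v ∈ K` meets `S` in a null set, then so does `p + K`.
This is Fubini on `K × K'` combined with translation invariance of Haar measure on `K`. -/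
lemma ae_slice_of_ae_subslice {P : Type*} [NormedAddCommGroup P] [NormedSpace ℝ P]
    [FiniteDimensional ℝ P] [MeasurableSpace P] [BorelSpace P]
    (K K' : Submodule ℝ P) (hK : K' ≤ K) (S : Set P) (hS : MeasurableSet S) (p : P)
    (h : ∀ᵐ v : K ∂Measure.addHaar, ∀ᵐ w : K' ∂Measure.addHaar, p + (v : P) + (w : P) ∉ S) :
    ∀ᵐ v : K ∂(Measure.addHaar : Measure K), p + (v : P) ∉ S := by
  set E : Set (K × K') := {z | p + (z.1 : P) + (z.2 : P) ∈ S} with hE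
  have hEm : MeasurableSet E := by
    have : Measurable fun z : K × K' => p + (z.1 : P) + (z.2 : P) := by
      have : Continuous fun z : K × K' => p + (z.1 : P) + (z.2 : P) := by fun_prop
      exact this.measurable
    exact this hS
  have h0 : ((Measure.addHaar : Measure K).prod (Measure.addHaar : Measure K')) E = 0 := by
    rw [Measure.measure_prod_null hEm]
    filter_upwards [h] with v hv
    rw [ae_iff] at hv
    simpa [hE] using hv
  have h1 : ((Measure.addHaar : Measure K').prod (Measure.addHaar : Measure K))
      (Prod.swap ⁻¹' E) = 0 := by
    rw [← Measure.map_apply measurable_swap hEm, Measure.prod_swap]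
    exact h0
  rw [Measure.measure_prod_null (measurable_swap hEm)] at h1
  obtain ⟨w, hw⟩ := h1.exists
  rw [ae_iff]
  have h2 : (fun v : K => v + ⟨(w : P), hK w.2⟩) ⁻¹' {v : K | ¬ (p + (v : P) ∉ S)}
      = Prod.mk w ⁻¹' (Prod.swap ⁻¹' E) := by
    ext v
    simp [hE, add_assoc]
  rw [← measure_preimage_add_right (Measure.addHaar : Measure K) ⟨(w : P), hK w.2⟩, h2]
  exact hw

/-- An affine condition `c + L v ∈ V` fails for almost every `v`, unless `range L ≤ V`. -/
lemma ae_add_notMem {E F : Type*} [NormedAddCommGroup E] [NormedSpace ℝ E]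
    [FiniteDimensional ℝ E] [MeasurableSpace E] [BorelSpace E]
    [AddCommGroup F] [Module ℝ F] (L : E →ₗ[ℝ] F) (V : Submodule ℝ F) (c : F)
    (h : ¬ LinearMap.range L ≤ V) :
    ∀ᵐ v ∂(Measure.addHaar : Measure E), c + L v ∉ V := by
  rw [ae_iff]
  simp only [not_not]
  by_cases hne : ∃ v₀, c + L v₀ ∈ V
  · obtain ⟨v₀, hv₀⟩ := hne
    have hW : V.comap L ≠ ⊤ := by
      intro hT
      apply h
      rintro _ ⟨v, rfl⟩
      have : v ∈ V.comap L := by rw [hT]; trivial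
      exact this
    rw [← measure_preimage_add_right (Measure.addHaar : Measure E) v₀]
    have : (fun v => v + v₀) ⁻¹' {v | c + L v ∈ V} = (V.comap L : Set E) := by
      ext v
      simp only [Set.mem_preimage, Set.mem_ofPred_eq, map_add, SetLike.mem_coe,
        Submodule.mem_comap]
      rw [show c + (L v + L v₀) = L v + (c + L v₀) by abel]
      exact V.add_mem_iff_left hv₀
    rw [this]
    exact Measure.addHaar_submodule _ _ hW
  · push Not at hne
    have : {v | c + L v ∈ V} = ∅ := by
      ext v; simpa using hne v
    rw [this, measure_empty]

/-! ### Vectors at which a large space of matrices acts with small rank -/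

/-- The map `N ↦ N x` on square matrices. -/
def evalAt {d : ℕ} (x : Fin d → ℝ) : (Fin d → Fin d → ℝ) →ₗ[ℝ] (Fin d → ℝ) where
  toFun N := fun a => ∑ a', N a a' * x a'
  map_add' N N' := by
    ext a; simp [add_mul, Finset.sum_add_distrib]
  map_smul' c N := by
    ext a; simp [Finset.mul_sum, mul_assoc]

lemma evalAt_apply {d : ℕ} (x : Fin d → ℝ) (N : Fin d → Fin d → ℝ) (a : Fin d) :
    evalAt x N a = ∑ a', N a a' * x a' := rfl

/-- Prescribing the values of a matrix on linearly independent vectors is possible. -/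
lemma evalAt_surjective {d : ℕ} (b : Set (Fin d → ℝ))
    (hb : LinearIndependent ℝ ((↑) : b → Fin d → ℝ)) :
    Function.Surjective (LinearMap.pi fun x : b => evalAt (x : Fin d → ℝ)) := by
  intro y
  obtain ⟨f, hf⟩ : ∃ f : (Fin d → ℝ) →ₗ[ℝ] (Fin d → ℝ), ∀ x : b, f x = y x := by
    replace hb : LinearIndepOn ℝ id b := hb
    let B := Module.Basis.extend hb
    refine ⟨B.constr ℝ fun z => if hz : (z : Fin d → ℝ) ∈ b then y ⟨z, hz⟩ else 0, fun x => ?_⟩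
    have hx : (x : Fin d → ℝ) = B ⟨x, hb.subset_extend _ x.2⟩ := by
      rw [Module.Basis.extend_apply_self]
    conv_lhs => rw [hx]
    rw [Module.Basis.constr_basis]
    simp
  refine ⟨LinearMap.toMatrix' f, ?_⟩
  ext x a
  have := congrFun (LinearMap.toMatrix'_mulVec f (x : Fin d → ℝ)) a
  rw [hf x] at this
  exact this

/-- If `ker G` has codimension at most `d²/4` in the `d × d` matrices, then the vectors `x` with
`dim (ker G · x) ≤ d/2` all lie in one subspace of dimension at most `d/2`: for `l` linearly
independent such vectors, `N ↦ (N x₁, …, N x_l)` is onto `ℝ^{dl}`, while `ker G` has image of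
dimension at most `l d/2`, whence `l d/2 ≤ codim (ker G)`. -/
lemma exists_exceptional_subspace {d : ℕ} {W : Type*} [AddCommGroup W] [Module ℝ W]
    [FiniteDimensional ℝ W] (G : (Fin d → Fin d → ℝ) →ₗ[ℝ] W)
    (hW : 4 * Module.finrank ℝ W ≤ d ^ 2) :
    ∃ V : Submodule ℝ (Fin d → ℝ), 2 * Module.finrank ℝ V ≤ d ∧
      ∀ x ∉ V, d < 2 * Module.finrank ℝ ((LinearMap.ker G).map (evalAt x)) := by
  set s : Set (Fin d → ℝ) :=
    {x | 2 * Module.finrank ℝ ((LinearMap.ker G).map (evalAt x)) ≤ d} with hs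
  refine ⟨Submodule.span ℝ s, ?_, fun x hx => ?_⟩
  swap
  · by_contra hcon
    exact hx (Submodule.subset_span (by simpa [hs] using hcon))
  obtain ⟨b, hbs, hspan, hli⟩ := exists_linearIndependent ℝ s
  have : Finite b := hli.finite
  have : Fintype b := Fintype.ofFinite b
  have hcard : Module.finrank ℝ (Submodule.span ℝ s) = Fintype.card b := by
    rw [← hspan]
    have := finrank_span_eq_card hli
    rwa [Subtype.range_coe] at this
  rw [hcard]
  set T : (Fin d → Fin d → ℝ) →ₗ[ℝ] (b → Fin d → ℝ) :=
    LinearMap.pi fun x : b => evalAt (x : Fin d → ℝ) with hT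
  have hsurj : Function.Surjective T := evalAt_surjective b hli
  obtain ⟨C, hC⟩ := Submodule.exists_isCompl (LinearMap.ker G)
  have hCfin : Module.finrank ℝ C ≤ Module.finrank ℝ W := by
    have h1 := Submodule.finrank_add_eq_of_isCompl hC
    have h2 := LinearMap.finrank_range_add_finrank_ker G
    have h3 := Submodule.finrank_le (LinearMap.range G)
    omega
  have htop : (LinearMap.ker G).map T ⊔ C.map T = ⊤ := by
    rw [← Submodule.map_sup, hC.sup_eq_top, Submodule.map_top, LinearMap.range_eq_top]
    exact hsurj
  have hdim : Fintype.card b * d ≤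
      Module.finrank ℝ ((LinearMap.ker G).map T) + Module.finrank ℝ W := by
    have h1 : Module.finrank ℝ (b → Fin d → ℝ) = Fintype.card b * d := by
      simp [Module.finrank_pi_fintype]
    have h2 := Submodule.finrank_add_le_finrank_add_finrank ((LinearMap.ker G).map T) (C.map T)
    rw [htop, finrank_top, h1] at h2
    have h3 := Submodule.finrank_map_le T C
    omega
  -- the image of `ker G` under `T` embeds into the product of the images under each `evalAt x`
  have hprod : Module.finrank ℝ ((LinearMap.ker G).map T) ≤
      ∑ x : b, Module.finrank ℝ ((LinearMap.ker G).map (evalAt (x : Fin d → ℝ))) := by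
    rw [← Module.finrank_pi_fintype]
    have hmem : ∀ (z : (LinearMap.ker G).map T) (x : b),
        (z : b → Fin d → ℝ) x ∈ (LinearMap.ker G).map (evalAt (x : Fin d → ℝ)) := by
      rintro ⟨_, N, hN, rfl⟩ x
      exact ⟨N, hN, rfl⟩
    let J : (LinearMap.ker G).map T →ₗ[ℝ]
        ((x : b) → (LinearMap.ker G).map (evalAt (x : Fin d → ℝ))) :=
      LinearMap.pi fun x => LinearMap.codRestrict _
        ((LinearMap.proj x).comp (Submodule.subtype _)) fun z => hmem z x
    apply LinearMap.finrank_le_finrank_of_injective (f := J)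
    intro z z' hzz
    ext x a
    have := congrArg Subtype.val (congrFun hzz x)
    exact congrFun this a
  have hsum : 2 * ∑ x : b, Module.finrank ℝ ((LinearMap.ker G).map (evalAt (x : Fin d → ℝ)))
      ≤ Fintype.card b * d := by
    rw [Finset.mul_sum]
    calc _ ≤ ∑ _x : b, d := Finset.sum_le_sum fun x _ => hbs x.2
      _ = _ := by simp
  rcases Nat.eq_zero_or_pos d with hd | hd
  · subst hd
    have : Subsingleton (Fin 0 → ℝ) := inferInstance
    have h1 := Submodule.finrank_le (Submodule.span ℝ s)
    rw [hcard] at h1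
    simp at h1
    simp [h1]
  · have h4 : (2 * Fintype.card b) * d ≤ d * d := by nlinarith
    exact Nat.le_of_mul_le_mul_right h4 hd

/-! ### Pointer chasing against a deterministic algorithm -/

/-- A chain of `t + 1` square blocks of size `d`. -/
abbrev Blocks (t d : ℕ) : Type := Fin (t + 1) → Fin d → Fin d → ℝ

/-- The pointer chain `x₀, p₀ x₀, p₁ p₀ x₀, …`. Block indices above `t` are reduced modulo `t + 1`;
only the entries up to index `t + 1` are used. -/
def chain {t d : ℕ} (x₀ : Fin d → ℝ) (p : Blocks t d) : ℕ → Fin d → ℝ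
  | 0 => x₀
  | j + 1 => evalAt (chain x₀ p j) (p (Fin.ofNat (t + 1) j))

lemma continuous_chain {t d : ℕ} (x₀ : Fin d → ℝ) (j : ℕ) :
    Continuous fun p : Blocks t d => chain x₀ p j := by
  induction j with
  | zero => exact continuous_const
  | succ j ih =>
    refine continuous_pi fun a => ?_
    simp only [chain, evalAt_apply]
    refine continuous_finsetSum _ fun a' _ => Continuous.mul (by fun_prop) ?_
    exact (continuous_apply a').comp ih

lemma chain_congr {t d : ℕ} (x₀ : Fin d → ℝ) (p q : Blocks t d) (j : ℕ) (hj : j ≤ t + 1)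
    (h : ∀ i : Fin (t + 1), (i : ℕ) < j → p i = q i) : chain x₀ p j = chain x₀ q j := by
  induction j with
  | zero => rfl
  | succ j ih =>
    simp only [chain]
    rw [ih (by omega) fun i hi => h i (by omega), h]
    simp [Nat.mod_eq_of_lt (show j < t + 1 by omega)]

section Deterministic

variable {N k t d : ℕ}

/-- The query matrix used in round `i` on input `a`. -/
def roundMat (Q : QueryMaps N k t) (a : Fin N → ℝ) (i : Fin t) : Matrix (Fin k) (Fin N) ℝ :=
  Q i fun l => Q.resp a ⟨l.1, l.isLt.trans i.isLt⟩

lemma resp_eq_roundMat (Q : QueryMaps N k t) (a : Fin N → ℝ) (i : Fin t) :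
    Q.resp a i = (roundMat Q a i).mulVec a := by
  rw [QueryMaps.resp]; rfl

lemma roundMat_congr (Q : QueryMaps N k t) (a a' : Fin N → ℝ) (i : Fin t)
    (h : ∀ l : Fin t, (l : ℕ) < i → Q.resp a l = Q.resp a' l) :
    roundMat Q a i = roundMat Q a' i := by
  unfold roundMat
  congr 1
  funext l
  exact h _ l.isLt

/-- Perturbing the input inside the kernels of the first `j` query matrices does not change the
first `j` responses. -/
lemma resp_add_eq (Q : QueryMaps N k t) (a w : Fin N → ℝ) (j : ℕ)
    (h : ∀ i : Fin t, (i : ℕ) < j → (roundMat Q a i).mulVec w = 0) (i : Fin t) (hi : (i : ℕ) < j) :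
    Q.resp (a + w) i = Q.resp a i := by
  induction hm : (i : ℕ) using Nat.strong_induction_on generalizing i with
  | _ m ih =>
    subst hm
    rw [resp_eq_roundMat, resp_eq_roundMat, roundMat_congr Q (a + w) a i
      fun l hl => ih l hl l (hl.trans hi) rfl, Matrix.mulVec_add, h i hi, add_zero]

/-- The directions left free after `j` rounds on input `a₀ + ψ p`, when moreover the blocks with
index below `j` are revealed. -/
def freeDir (Q : QueryMaps N k t) (a₀ : Fin N → ℝ) (ψ : Blocks t d →ₗ[ℝ] (Fin N → ℝ))
    (p : Blocks t d) (j : ℕ) : Submodule ℝ (Blocks t d) where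
  carrier := {v | (∀ i : Fin (t + 1), (i : ℕ) < j → v i = 0) ∧
    ∀ i : Fin t, (i : ℕ) < j → (roundMat Q (a₀ + ψ p) i).mulVec (ψ v) = 0}
  add_mem' := by
    rintro v w ⟨hv, hv'⟩ ⟨hw, hw'⟩
    refine ⟨fun i hi => by simp [hv i hi, hw i hi], fun i hi => ?_⟩
    rw [map_add, Matrix.mulVec_add, hv' i hi, hw' i hi, add_zero]
  zero_mem' := by simp
  smul_mem' := by
    rintro c v ⟨hv, hv'⟩
    refine ⟨fun i hi => by simp [hv i hi], fun i hi => ?_⟩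
    rw [map_smul, Matrix.mulVec_smul, hv' i hi, smul_zero]

lemma mem_freeDir (Q : QueryMaps N k t) (a₀ : Fin N → ℝ) (ψ : Blocks t d →ₗ[ℝ] (Fin N → ℝ))
    (p : Blocks t d) (j : ℕ) (v : Blocks t d) :
    v ∈ freeDir Q a₀ ψ p j ↔ (∀ i : Fin (t + 1), (i : ℕ) < j → v i = 0) ∧
      ∀ i : Fin t, (i : ℕ) < j → (roundMat Q (a₀ + ψ p) i).mulVec (ψ v) = 0 := Iff.rfl

lemma freeDir_anti (Q : QueryMaps N k t) (a₀ : Fin N → ℝ) (ψ : Blocks t d →ₗ[ℝ] (Fin N → ℝ))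
    (p : Blocks t d) (j : ℕ) : freeDir Q a₀ ψ p (j + 1) ≤ freeDir Q a₀ ψ p j :=
  fun _ hv => ⟨fun i hi => hv.1 i (by omega), fun i hi => hv.2 i (by omega)⟩

lemma resp_add_of_mem (Q : QueryMaps N k t) (a₀ : Fin N → ℝ)
    (ψ : Blocks t d →ₗ[ℝ] (Fin N → ℝ)) (p v : Blocks t d) (j : ℕ)
    (hv : v ∈ freeDir Q a₀ ψ p j) (i : Fin t) (hi : (i : ℕ) < j) :
    Q.resp (a₀ + ψ (p + v)) i = Q.resp (a₀ + ψ p) i := by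
  rw [map_add, ← add_assoc]
  exact resp_add_eq Q _ _ j hv.2 i hi

/-- The round-`j` query matrix depends only on the first `j` responses, so the free directions
after one more round are constant along `p + freeDir p j`. -/
lemma freeDir_succ_add (Q : QueryMaps N k t) (a₀ : Fin N → ℝ)
    (ψ : Blocks t d →ₗ[ℝ] (Fin N → ℝ)) (p v : Blocks t d) (j : ℕ)
    (hv : v ∈ freeDir Q a₀ ψ p j) :
    freeDir Q a₀ ψ (p + v) (j + 1) = freeDir Q a₀ ψ p (j + 1) := by
  have key : ∀ i : Fin t, (i : ℕ) < j + 1 →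
      roundMat Q (a₀ + ψ (p + v)) i = roundMat Q (a₀ + ψ p) i := fun i hi =>
    roundMat_congr Q _ _ i fun l hl => resp_add_of_mem Q a₀ ψ p v j hv l (by omega)
  ext w
  simp only [mem_freeDir]
  refine and_congr_right fun _ => forall_congr' fun i => forall_congr' fun hi => ?_
  rw [key i hi]

/-- The possible changes of the chain entry `j + 1` along `K`, given the entry `x` at `j`. -/
def stepMap (x : Fin d → ℝ) (j : ℕ) (K : Submodule ℝ (Blocks t d)) : K →ₗ[ℝ] (Fin d → ℝ) :=
  (evalAt x).comp ((LinearMap.proj (Fin.ofNat (t + 1) j)).comp K.subtype)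

lemma chain_succ_add (Q : QueryMaps N k t) (a₀ x₀) (ψ : Blocks t d →ₗ[ℝ] (Fin N → ℝ))
    (p : Blocks t d) (j : ℕ) (hj : j ≤ t) (v : freeDir Q a₀ ψ p j) :
    chain x₀ (p + (v : Blocks t d)) (j + 1) =
      chain x₀ p (j + 1) + stepMap (chain x₀ p j) j (freeDir Q a₀ ψ p j) v := by
  have h := chain_congr x₀ (p + (v : Blocks t d)) p j (by omega) fun i hi => by simp [v.2.1 i hi]
  simp [chain, stepMap, h]

/-- All but a subspace of dimension at most `d/2` of vectors `x` are moved in more than `d/2`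
dimensions by the free directions. -/
lemma exists_exceptional_freeDir (Q : QueryMaps N k t) (a₀ : Fin N → ℝ)
    (ψ : Blocks t d →ₗ[ℝ] (Fin N → ℝ)) (hd : 4 * (t * k) ≤ d ^ 2)
    (p : Blocks t d) (j : ℕ) (hj : j ≤ t) :
    ∃ V : Submodule ℝ (Fin d → ℝ), 2 * Module.finrank ℝ V ≤ d ∧ ∀ x ∉ V,
      d < 2 * Module.finrank ℝ (LinearMap.range (stepMap x j (freeDir Q a₀ ψ p j))) := by
  -- the constraints of the first `j` rounds on the block `j` alone, padded by zero to `t` rounds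
  let G : (Fin d → Fin d → ℝ) →ₗ[ℝ] (Fin t → Fin k → ℝ) := LinearMap.pi fun i =>
    if (i : ℕ) < j then (roundMat Q (a₀ + ψ p) i).mulVecLin.comp
      (ψ.comp (LinearMap.single ℝ (fun _ => Fin d → Fin d → ℝ) (Fin.ofNat (t + 1) j))) else 0
  obtain ⟨V, hV, hx⟩ := exists_exceptional_subspace G (by
    simpa [Module.finrank_pi_fintype] using hd)
  refine ⟨V, hV, fun x hxV => (hx x hxV).trans_le ?_⟩
  gcongr
  apply Submodule.finrank_mono
  rintro _ ⟨M, hM, rfl⟩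
  refine ⟨⟨Pi.single (Fin.ofNat (t + 1) j) M, fun i hi => ?_, fun i hi => ?_⟩, ?_⟩
  · rw [Pi.single_eq_of_ne]
    rintro rfl
    simp [Nat.mod_eq_of_lt (show j < t + 1 by omega)] at hi
  · have := congrFun (LinearMap.mem_ker.mp hM) i
    simpa [G, hi] using this
  · simp [stepMap]

/-- Along the slice `p + freeDir p j` the algorithm almost surely fails to output the last chain
entry, provided the entry `j + 1` varies in more than `d/2` dimensions along it. -/
lemma ae_fail_slice (Q : QueryMaps N k t) (a₀ x₀) (ψ : Blocks t d →ₗ[ℝ] (Fin N → ℝ))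
    (hd : 4 * (t * k) ≤ d ^ 2) (f : (Fin t → Fin k → ℝ) → Fin d → ℝ)
    (hS : MeasurableSet {p : Blocks t d | f (Q.resp (a₀ + ψ p)) = chain x₀ p (t + 1)})
    (s j : ℕ) (hsj : j + s = t) (p : Blocks t d)
    (hp : d < 2 * Module.finrank ℝ
      (LinearMap.range (stepMap (chain x₀ p j) j (freeDir Q a₀ ψ p j)))) :
    ∀ᵐ v : freeDir Q a₀ ψ p j ∂Measure.addHaar,
      p + (v : Blocks t d) ∉ {p : Blocks t d | f (Q.resp (a₀ + ψ p)) = chain x₀ p (t + 1)} := by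
  induction s generalizing j p with
  | zero =>
    obtain rfl : j = t := by omega
    -- all responses are constant on the slice while the last chain entry varies
    have hne : ¬ LinearMap.range (stepMap (chain x₀ p j) j (freeDir Q a₀ ψ p j)) ≤ ⊥ := by
      intro h
      rw [le_bot_iff] at h
      rw [h] at hp
      simp at hp
    filter_upwards [ae_add_notMem _ _ (chain x₀ p (j + 1) - f (Q.resp (a₀ + ψ p))) hne] with v hv
    intro hmem
    apply hv
    have hr : Q.resp (a₀ + ψ (p + v)) = Q.resp (a₀ + ψ p) :=
      funext fun i => resp_add_of_mem Q a₀ ψ p v j v.2 i i.isLt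
    rw [hr, chain_succ_add Q a₀ x₀ ψ p j le_rfl v] at hmem
    rw [Submodule.mem_bot, hmem]
    abel
  | succ s ih =>
    apply ae_slice_of_ae_subslice _ (freeDir Q a₀ ψ p (j + 1)) (freeDir_anti Q a₀ ψ p j) _ hS
    obtain ⟨V, hV, hx⟩ := exists_exceptional_freeDir Q a₀ ψ hd p (j + 1) (by omega)
    have hne : ¬ LinearMap.range (stepMap (chain x₀ p j) j (freeDir Q a₀ ψ p j)) ≤ V := by
      intro h
      have := Submodule.finrank_mono h
      omega
    filter_upwards [ae_add_notMem _ _ (chain x₀ p (j + 1)) hne] with v hv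
    rw [← chain_succ_add Q a₀ x₀ ψ p j (by omega) v] at hv
    have hfree := freeDir_succ_add Q a₀ ψ p v j v.2
    have := ih (j + 1) (by omega) (p + v) (by rw [hfree]; exact hx _ hv)
    rw [hfree] at this
    exact this

/-- A deterministic algorithm almost never outputs the last chain entry. -/
lemma ae_fail (Q : QueryMaps N k t) (a₀ x₀) (ψ : Blocks t d →ₗ[ℝ] (Fin N → ℝ))
    (hd : 4 * (t * k) ≤ d ^ 2) (hd0 : 0 < d) (hx₀ : x₀ ≠ 0)
    (f : (Fin t → Fin k → ℝ) → Fin d → ℝ)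
    (hS : MeasurableSet {p : Blocks t d | f (Q.resp (a₀ + ψ p)) = chain x₀ p (t + 1)}) :
    ∀ᵐ v : (⊤ : Submodule ℝ (Blocks t d)) ∂Measure.addHaar,
      f (Q.resp (a₀ + ψ v)) ≠ chain x₀ v.1 (t + 1) := by
  have htop : freeDir Q a₀ ψ 0 0 = ⊤ := by
    ext v; simp [mem_freeDir]
  have hrange : LinearMap.range (stepMap (chain x₀ (0 : Blocks t d) 0) 0 (freeDir Q a₀ ψ 0 0)) = ⊤ := by
    rw [LinearMap.range_eq_top, htop]
    intro y
    have hli : LinearIndependent ℝ ((↑) : ({x₀} : Set (Fin d → ℝ)) → Fin d → ℝ) :=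
      LinearIndepOn.singleton (R := ℝ) (v := id) (i := x₀) hx₀
    obtain ⟨M, hM⟩ := evalAt_surjective _ hli fun _ => y
    refine ⟨⟨fun _ => M, trivial⟩, ?_⟩
    exact congrFun hM ⟨x₀, rfl⟩
  have := ae_fail_slice Q a₀ x₀ ψ hd f hS t 0 (by omega) 0 (by
    rw [hrange, finrank_top]; simp; omega)
  rw [htop] at this
  simpa using this

end Deterministic

/-! ### The linear system encoding the chain -/

section Encoding

variable {n t d : ℕ}

/-- The `n × n` matrix whose only nonzero entries are those of block `j`, placed in the rows
`e (j + 1, ·)` and the columns `e (j, ·)`. -/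
def shiftMat (e : Fin (t + 2) × Fin d ↪ Fin n) : Blocks t d →ₗ[ℝ] Matrix (Fin n) (Fin n) ℝ where
  toFun p := Matrix.of fun i i' => ∑ j : Fin (t + 1), ∑ a, ∑ a',
    if i = e (j.succ, a) then if i' = e (j.castSucc, a') then p j a a' else 0 else 0
  map_add' p q := by
    ext i i'
    simp only [Matrix.of_apply, Matrix.add_apply, ← Finset.sum_add_distrib]
    refine Finset.sum_congr rfl fun j _ => Finset.sum_congr rfl fun a _ =>
      Finset.sum_congr rfl fun a' _ => ?_
    split_ifs <;> simp
  map_smul' c p := by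
    ext i i'
    simp only [Matrix.of_apply, Matrix.smul_apply, smul_eq_mul, Finset.mul_sum, RingHom.id_apply]
    refine Finset.sum_congr rfl fun j _ => Finset.sum_congr rfl fun a _ =>
      Finset.sum_congr rfl fun a' _ => ?_
    split_ifs <;> simp

/-- The vector in `ℝⁿ` with entry `z j a` at `e (j, a)` and zero outside the range of `e`. -/
def placeVec (e : Fin (t + 2) × Fin d ↪ Fin n) (z : Fin (t + 2) → Fin d → ℝ) : Fin n → ℝ :=
  fun i => ∑ j, ∑ a, if i = e (j, a) then z j a else 0

lemma placeVec_apply (e : Fin (t + 2) × Fin d ↪ Fin n) (z : Fin (t + 2) → Fin d → ℝ)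
    (j : Fin (t + 2)) (a : Fin d) : placeVec e z (e (j, a)) = z j a := by
  unfold placeVec
  rw [← Fintype.sum_prod_type' (f := fun j' a' => if e (j, a) = e (j', a') then z j' a' else 0)]
  rw [Finset.sum_eq_single (j, a)]
  · simp
  · rintro ⟨j', a'⟩ - hne
    rw [if_neg fun h => hne (e.injective h).symm]
  · simp

lemma shiftMat_mulVec (e : Fin (t + 2) × Fin d ↪ Fin n) (p : Blocks t d) (y : Fin n → ℝ) :
    (shiftMat e p).mulVec y = placeVec e
      (Fin.cons 0 fun j : Fin (t + 1) => evalAt (fun a' => y (e (j.castSucc, a'))) (p j)) := by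
  ext i
  rw [placeVec, Fin.sum_univ_succ]
  simp only [Fin.cons_zero, Fin.cons_succ, Pi.zero_apply, ite_self, Finset.sum_const_zero, zero_add,
    evalAt_apply, Matrix.mulVec, dotProduct, shiftMat, LinearMap.coe_mk, AddHom.coe_mk,
    Matrix.of_apply, Finset.sum_mul]
  rw [Finset.sum_comm]
  refine Finset.sum_congr rfl fun j _ => ?_
  rw [Finset.sum_comm]
  refine Finset.sum_congr rfl fun a _ => ?_
  rw [Finset.sum_comm]
  split_ifs with h
  · refine Finset.sum_congr rfl fun a' _ => ?_
    simp [ite_mul]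
  · simp

/-- The right-hand side: `x₀` placed at level zero. -/
def startVec (e : Fin (t + 2) × Fin d ↪ Fin n) (x₀ : Fin d → ℝ) : Fin n → ℝ :=
  placeVec e (Fin.cons x₀ 0)

/-- The system `(1 - shiftMat p) y = startVec x₀` is solved by the pointer chain. -/
lemma system_mulVec_chain (e : Fin (t + 2) × Fin d ↪ Fin n) (x₀ : Fin d → ℝ) (p : Blocks t d) :
    (1 - shiftMat e p).mulVec (placeVec e fun j => chain x₀ p j) = startVec e x₀ := by
  rw [Matrix.sub_mulVec, Matrix.one_mulVec, shiftMat_mulVec, sub_eq_iff_eq_add]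
  ext i
  simp only [placeVec_apply, startVec, Pi.add_apply]
  simp only [placeVec, ← Finset.sum_add_distrib]
  refine Finset.sum_congr rfl fun j _ => Finset.sum_congr rfl fun a _ => ?_
  split_ifs
  · refine Fin.cases ?_ (fun j => ?_) j
    · simp [chain]
    · simp [chain]
  · simp

/-- Every solution of the system contains the pointer chain. -/
lemma chain_eq_of_system (e : Fin (t + 2) × Fin d ↪ Fin n) (x₀ : Fin d → ℝ) (p : Blocks t d)
    (y : Fin n → ℝ) (h : (1 - shiftMat e p).mulVec y = startVec e x₀) (j : Fin (t + 2)) :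
    (fun a => y (e (j, a))) = chain x₀ p j := by
  rw [Matrix.sub_mulVec, Matrix.one_mulVec, shiftMat_mulVec, sub_eq_iff_eq_add] at h
  have h' : ∀ j a, y (e (j, a)) = _ := fun j a => congrFun h (e (j, a))
  simp only [startVec, Pi.add_apply, placeVec_apply] at h'
  induction j using Fin.induction with
  | zero => ext a; rw [h']; simp [chain]
  | succ j ih => ext a; rw [h']; simp [chain, ih]

end Encoding

/-! ### The exact solution forced by optimum zero -/

lemma specNorm_nonneg {m n : Type*} [Fintype m] [Fintype n] (A : Matrix m n ℝ) :
    0 ≤ specNorm A := by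
  apply Real.sSup_nonneg
  rintro _ ⟨x, -, rfl⟩
  exact Real.sqrt_nonneg _

lemma specNorm_zero {m n : Type*} [Fintype m] [Fintype n] :
    specNorm (0 : Matrix m n ℝ) = 0 := by
  apply le_antisymm _ (specNorm_nonneg _)
  apply Real.sSup_le _ le_rfl
  rintro _ ⟨x, -, rfl⟩
  simp [sqNorm]

lemma eq_zero_of_specNorm_le_zero {m n : Type*} [Fintype m] [Fintype n] (A : Matrix m n ℝ)
    (h : specNorm A ≤ 0) : A = 0 := by
  have hb : BddAbove ((fun x : n → ℝ => Real.sqrt (sqNorm (A.mulVec x))) ''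
      {x | sqNorm x ≤ 1}) := by
    refine ⟨Real.sqrt (∑ i, (∑ j, |A i j|) ^ 2), ?_⟩
    rintro _ ⟨x, hx, rfl⟩
    apply Real.sqrt_le_sqrt
    apply Finset.sum_le_sum
    intro i _
    rw [← sq_abs]
    apply pow_le_pow_left₀ (abs_nonneg _)
    refine (Finset.abs_sum_le_sum_abs _ _).trans (Finset.sum_le_sum fun j _ => ?_)
    rw [abs_mul]
    apply mul_le_of_le_one_right (abs_nonneg _)
    rw [← sq_le_one_iff_abs_le_one]
    exact (Finset.single_le_sum (f := fun j => x j ^ 2) (fun j _ => sq_nonneg _)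
      (Finset.mem_univ j)).trans hx
  ext i j
  have h1 := (le_csSup hb ⟨Pi.single j 1, by
    simp [sqNorm, Pi.single_apply], rfl⟩).trans h
  have h2 : sqNorm (A.mulVec (Pi.single j 1)) ≤ 0 := Real.sqrt_eq_zero'.mp
    (le_antisymm h1 (Real.sqrt_nonneg _))
  have h3 := (Finset.single_le_sum (f := fun i => (A.mulVec (Pi.single j 1)) i ^ 2)
    (fun j _ => sq_nonneg _) (Finset.mem_univ i)).trans h2
  have h4 := pow_eq_zero_iff (two_ne_zero) |>.mp (le_antisymm h3 (sq_nonneg _))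
  simpa using h4

/-- If `A X = B` has a solution of rank at most `r`, a factor-two approximation is exact. -/
lemma mul_eq_of_approx {n r : ℕ} (A B X X' : Matrix (Fin n) (Fin n) ℝ)
    (hX' : X'.rank ≤ r) (hAX' : A * X' = B)
    (h : specNorm (A * X - B) ≤ 2 * sInf {c' | ∃ X : Matrix (Fin n) (Fin n) ℝ,
      X.rank ≤ r ∧ c' = specNorm (A * X - B)}) : A * X = B := by
  have h0 : sInf {c' | ∃ X : Matrix (Fin n) (Fin n) ℝ,
      X.rank ≤ r ∧ c' = specNorm (A * X - B)} ≤ 0 := by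
    apply csInf_le
    · refine ⟨0, ?_⟩
      rintro _ ⟨X, -, rfl⟩
      exact specNorm_nonneg _
    · exact ⟨X', hX', by rw [hAX', sub_self, specNorm_zero]⟩
  exact sub_eq_zero.mp (eq_zero_of_specNorm_le_zero _ (by linarith))

/-- The numerical trade-off: if `t` is below `log (n²/k) / (100 log log n)`, there is room for
`t + 2` blocks of size `d` with `4 t k ≤ d²`. -/
lemma exists_block_size (n k t : ℕ) (hn : 16 ≤ n) (hk : n ≤ k) (hkn : k ≤ n ^ 2)
    (h : (t : ℝ) < 1 / 100 * (Real.log ((n : ℝ) ^ 2 / k) / Real.log (Real.log n))) :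
    ∃ d : ℕ, 0 < d ∧ (t + 2) * d ≤ n ∧ 4 * (t * k) ≤ d ^ 2 := by
  rcases Nat.eq_zero_or_pos t with rfl | ht
  · exact ⟨1, one_pos, by omega, by simp⟩
  have hnR : (16 : ℝ) ≤ n := by exact_mod_cast hn
  have hkR : (n : ℝ) ≤ k := by exact_mod_cast hk
  have hk0 : (0 : ℝ) < k := by linarith
  have hy : (1 : ℝ) ≤ (n : ℝ) ^ 2 / k := by
    rw [le_div_iff₀ hk0]; exact_mod_cast (by simpa using hkn)
  have he : Real.exp 1 < 2.7182818286 := Real.exp_one_lt_d9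
  have hll : 1 ≤ Real.log (Real.log n) := by
    rw [Real.le_log_iff_exp_le (Real.log_pos (by linarith))]
    -- `log 16 = 4 log 2 > e`
    have h16 : Real.log 16 = 4 * Real.log 2 := by
      rw [show (16 : ℝ) = 2 ^ 4 by norm_num, Real.log_pow]; norm_num
    have := Real.log_two_gt_d9
    have := Real.log_le_log (by norm_num) hnR
    linarith
  have hlog : 100 * (t : ℝ) < Real.log ((n : ℝ) ^ 2 / k) := by
    have := div_le_self (Real.log_nonneg hy) hll
    linarith
  have hexp : Real.exp (100 * t) < (n : ℝ) ^ 2 / k :=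
    (Real.lt_log_iff_exp_lt (by linarith)).mp hlog
  have hcube := Real.pow_div_factorial_le_exp (100 * (t : ℝ)) (by positivity) 3
  have hbig : 144 * (t : ℝ) ^ 3 * k ≤ (n : ℝ) ^ 2 := by
    rw [← le_div_iff₀ hk0]
    have : (0 : ℝ) ≤ (t : ℝ) ^ 3 := by positivity
    norm_num [Nat.factorial, mul_pow] at hcube
    linarith
  have hbigN : 144 * t ^ 3 * k ≤ n ^ 2 := by exact_mod_cast hbig
  have ht3 : t ≤ t ^ 3 := Nat.le_self_pow (by norm_num) t
  have htn : 144 * t ≤ n := by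
    have : 144 * t * n ≤ n * n := by
      calc 144 * t * n ≤ 144 * t ^ 3 * k := by gcongr
        _ ≤ n ^ 2 := hbigN
        _ = n * n := sq n
    exact Nat.le_of_mul_le_mul_right this (by omega)
  have hd1 : 0 < n / (t + 2) := Nat.div_pos (by omega) (by omega)
  refine ⟨n / (t + 2), hd1, Nat.mul_div_le n (t + 2), ?_⟩
  set d := n / (t + 2) with hd
  have hlt : n < (t + 2) * (d + 1) := by
    rw [hd]; exact Nat.lt_mul_div_succ n (by omega)
  have hle : n ≤ 6 * t * d := by nlinarith
  have h36 : n ^ 2 ≤ 36 * t ^ 2 * d ^ 2 := by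
    calc n ^ 2 ≤ (6 * t * d) ^ 2 := by gcongr
      _ = _ := by ring
  have : 36 * t ^ 2 * (4 * (t * k)) ≤ 36 * t ^ 2 * d ^ 2 := by
    calc 36 * t ^ 2 * (4 * (t * k)) = 144 * t ^ 3 * k := by ring
      _ ≤ _ := hbigN.trans h36
  exact Nat.le_of_mul_le_mul_left this (by positivity)

/-! ### Random seeds and the round lower bound -/

/-- The linear part in `p` of the concatenated input vector of the instance `(1 - shiftMat p, B)`. -/
def inputMap {n t d : ℕ} (e : Fin (t + 2) × Fin d ↪ Fin n) :
    Blocks t d →ₗ[ℝ] (Fin (n * n + n * n) → ℝ) where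
  toFun p := Fin.append (_root_.vec n (-shiftMat e p)) 0
  map_add' p q := by
    ext i
    refine Fin.addCases (fun i => ?_) (fun i => ?_) i
    · simp only [Pi.add_apply, Fin.append_left]
      simp [_root_.vec, add_comm]
    · simp only [Pi.add_apply, Fin.append_right]
      simp
  map_smul' c p := by
    ext i
    refine Fin.addCases (fun i => ?_) (fun i => ?_) i
    · simp only [Pi.smul_apply, Fin.append_left]
      simp [_root_.vec]
    · simp only [Pi.smul_apply, Fin.append_right]
      simp

lemma append_eq_add_inputMap {n t d : ℕ} (e : Fin (t + 2) × Fin d ↪ Fin n)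
    (B : Matrix (Fin n) (Fin n) ℝ) (p : Blocks t d) :
    Fin.append (_root_.vec n (1 - shiftMat e p)) (_root_.vec n B) =
      Fin.append (_root_.vec n 1) (_root_.vec n B) + inputMap e p := by
  ext i
  refine Fin.addCases (fun i => ?_) (fun i => ?_) i
  · simp only [inputMap, LinearMap.coe_mk, AddHom.coe_mk, Pi.add_apply, Fin.append_left]
    simp only [_root_.vec, Matrix.sub_apply, Matrix.neg_apply, sub_eq_add_neg]
  · simp only [inputMap, LinearMap.coe_mk, AddHom.coe_mk, Pi.add_apply, Fin.append_right]
    simp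

lemma measurable_resp {N k t d : ℕ} {Ω : Type} [MeasurableSpace Ω] (Qf : Ω → QueryMaps N k t)
    (hQm : ∀ (j : Fin t) (i : Fin k) (l : Fin N),
      Measurable fun p : Ω × (Fin (j : ℕ) → Fin k → ℝ) => Qf p.1 j p.2 i l)
    (a₀ : Fin N → ℝ) (ψ : Blocks t d →ₗ[ℝ] (Fin N → ℝ)) (j : Fin t) :
    Measurable fun z : Ω × Blocks t d => (Qf z.1).resp (a₀ + ψ z.2) j := by
  induction hm : (j : ℕ) using Nat.strong_induction_on generalizing j with
  | _ m ih =>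
    subst hm
    have hψ : Measurable ψ := ψ.continuous_of_finiteDimensional.measurable
    have hhist : Measurable fun z : Ω × Blocks t d =>
        fun l : Fin (j : ℕ) => (Qf z.1).resp (a₀ + ψ z.2) ⟨l.1, l.isLt.trans j.isLt⟩ :=
      measurable_pi_iff.mpr fun l => ih l l.isLt _ rfl
    refine measurable_pi_iff.mpr fun i => ?_
    have hsum : (fun z : Ω × Blocks t d => (Qf z.1).resp (a₀ + ψ z.2) j i) = fun z =>
        ∑ l, roundMat (Qf z.1) (a₀ + ψ z.2) j i l * (a₀ + ψ z.2) l := by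
      funext z
      rw [resp_eq_roundMat]
      rfl
    rw [hsum]
    refine Finset.measurable_sum _ fun l _ => Measurable.mul ?_ ?_
    · exact (hQm j i l).comp (measurable_fst.prodMk hhist)
    · exact (measurable_pi_apply l).comp ((hψ.comp measurable_snd).const_add a₀)

/-- Round lower bound for 2-approximate reduced-rank regression in spectral norm. -/
theorem reduced_rank_regression_round_lower_bound :
    ∃ (c : ℝ) (n₀ : ℕ), 0 < c ∧
      ∀ (n r k t : ℕ), n₀ ≤ n → 1 ≤ r → n * r ≤ k → k ≤ n ^ 2 →
      ∀ (Ω : Type) [MeasurableSpace Ω] (μ : Measure Ω) [IsProbabilityMeasure μ]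
        (Qf : Ω → QueryMaps (n * n + n * n) k t)
        (out : Ω → (Fin t → Fin k → ℝ) → Matrix (Fin n) (Fin n) ℝ),
        (∀ ω, (Qf ω).Valid) →
        (∀ (j : Fin t) (i : Fin k) (l : Fin (n * n + n * n)),
            Measurable fun p : Ω × (Fin (j : ℕ) → Fin k → ℝ) => Qf p.1 j p.2 i l) →
        (∀ i j : Fin n,
            Measurable fun p : Ω × (Fin t → Fin k → ℝ) => out p.1 p.2 i j) →
        (∀ A B : Matrix (Fin n) (Fin n) ℝ,
            (9 / 10 : ℝ≥0∞) ≤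
              μ {ω | (out ω (QueryMaps.resp (Qf ω)
                        (Fin.append (vec n A) (vec n B)))).rank ≤ r ∧
                    specNorm (A * out ω (QueryMaps.resp (Qf ω)
                        (Fin.append (vec n A) (vec n B))) - B)
                      ≤ 2 * sInf {c' | ∃ X : Matrix (Fin n) (Fin n) ℝ,
                          X.rank ≤ r ∧ c' = specNorm (A * X - B)}}) →
        c * (Real.log ((n : ℝ) ^ 2 / k) / Real.log (Real.log n)) ≤ (t : ℝ) := by
  refine ⟨1 / 100, 16, by norm_num, ?_⟩
  intro n r k t hn hr hk hkn Ω _ μ _ Qf out _ hQm hout hsucc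
  by_contra hlt
  push Not at hlt
  obtain ⟨d, hd0, hdn, hd⟩ := exists_block_size n k t hn
    ((Nat.le_mul_of_pos_right n hr).trans hk) hkn hlt
  obtain ⟨e⟩ : Nonempty (Fin (t + 2) × Fin d ↪ Fin n) :=
    Function.Embedding.nonempty_of_card_le (by simpa using hdn)
  let x₀ : Fin d → ℝ := fun _ => 1
  have hx₀ : x₀ ≠ 0 := fun h => one_ne_zero (congrFun h ⟨0, hd0⟩)
  let c : Fin n := ⟨0, by omega⟩
  let B : Matrix (Fin n) (Fin n) ℝ := Matrix.vecMulVec (startVec e x₀) (Pi.single c 1)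
  let a₀ : Fin (n * n + n * n) → ℝ := Fin.append (_root_.vec n 1) (_root_.vec n B)
  let ψ := inputMap e
  have hinput : ∀ p, Fin.append (_root_.vec n (1 - shiftMat e p)) (_root_.vec n B) = a₀ + ψ p :=
    fun p => append_eq_add_inputMap e B p
  let f : Ω → (Fin t → Fin k → ℝ) → Fin d → ℝ :=
    fun ω h a => out ω h (e (Fin.last (t + 1), a)) c
  -- a successful run reveals the last chain entry
  have hforce : ∀ p, (9 / 10 : ℝ≥0∞) ≤
      μ {ω | f ω ((Qf ω).resp (a₀ + ψ p)) = chain x₀ p (t + 1)} := by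
    intro p
    refine (hsucc (1 - shiftMat e p) B).trans (measure_mono ?_)
    rintro ω ⟨-, hω⟩
    rw [hinput] at hω
    have hex := mul_eq_of_approx (r := r) (1 - shiftMat e p) B _
      (Matrix.vecMulVec (placeVec e fun j => chain x₀ p j) (Pi.single c 1))
      ((Matrix.rank_vecMulVec_le _ _).trans hr)
      (by rw [Matrix.mul_vecMulVec, system_mulVec_chain]) hω
    have hcol : (1 - shiftMat e p).mulVec
        (fun i => out ω ((Qf ω).resp (a₀ + ψ p)) i c) = startVec e x₀ := by
      ext i
      have := congrFun (congrFun hex i) c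
      simpa [B, Matrix.vecMulVec_apply, Matrix.mul_apply, Matrix.mulVec, dotProduct] using this
    have := chain_eq_of_system e x₀ p _ hcol (Fin.last (t + 1))
    simpa using this
  have hmeas : MeasurableSet {z : Ω × Blocks t d |
      f z.1 ((Qf z.1).resp (a₀ + ψ z.2)) = chain x₀ z.2 (t + 1)} := by
    apply measurableSet_eq_fun
    · refine measurable_pi_iff.mpr fun a => ?_
      exact (hout (e (Fin.last (t + 1), a)) c).comp
        (measurable_fst.prodMk (measurable_pi_iff.mpr fun j => measurable_resp Qf hQm a₀ ψ j))
    · exact (continuous_chain x₀ (t + 1)).measurable.comp measurable_snd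
  -- for every seed, almost every instance is answered wrongly
  set E : Set (Ω × (⊤ : Submodule ℝ (Blocks t d))) :=
    {z | f z.1 ((Qf z.1).resp (a₀ + ψ z.2)) = chain x₀ z.2.1 (t + 1)} with hE
  have hEm : MeasurableSet E :=
    (measurable_fst.prodMk (measurable_subtype_coe.comp measurable_snd)) hmeas
  have hnull : (μ.prod (Measure.addHaar : Measure (⊤ : Submodule ℝ (Blocks t d)))) E = 0 := by
    rw [Measure.measure_prod_null hEm]
    refine Filter.Eventually.of_forall fun ω => ?_
    have := ae_fail (Qf ω) a₀ x₀ ψ hd hd0 hx₀ (f ω) (measurable_prodMk_left hmeas)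
    rw [ae_iff] at this
    simpa [hE] using this
  have hnull' : ((Measure.addHaar : Measure (⊤ : Submodule ℝ (Blocks t d))).prod μ)
      (Prod.swap ⁻¹' E) = 0 := by
    rw [← Measure.map_apply measurable_swap hEm, Measure.prod_swap]
    exact hnull
  rw [Measure.measure_prod_null (measurable_swap hEm)] at hnull'
  obtain ⟨v, hv⟩ := hnull'.exists
  have h9 := hforce v
  have hv' : μ {ω | f ω ((Qf ω).resp (a₀ + ψ v)) = chain x₀ v.1 (t + 1)} = 0 := hv
  rw [hv'] at h9
  simp at h9

end
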